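/- arXiv:2507.12096 — 2 statements merged into one kernel-verified Lean document; each statement's English description precedes it below -/
import Mathlib

section
/- Let G be a digraph, s, t1, t2 ∈ V(G) with s ∉ {t1, t2} and t1 ≠ t2, and let c_0, c_1, …, c_k be a sequence of cut vertices between s and t1, t2 whose entries are pairwise distinct. For each 0 ≤ j ≤ k−1 let P_j^1 and P_j^2 be internally vertex-disjoint directed paths from c_j to c_{j+1}, and let P_k^1 and P_k^2 be internally vertex-disjoint directed paths from c_k to t1 and from c_k to t2, respectively. Then the concatenation P^1 = P_0^1 P_1^1 ⋯ P_k^1 is a directed path from s to t1, the concatenation P^2 = P_0^2 P_1^2 ⋯ P_k^2 is a directed path from s to t2, and V(P^1) ∩ V(P^2) = {c_0, c_1, …, c_k}. -/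
/-- A digraph: a finite vertex set together with a set of edges,
which are ordered pairs of distinct vertices. -/
structure Dgraph (V : Type*) where
  verts : Set V
  Edge : V → V → Prop
  mem_of_edge : ∀ ⦃x y⦄, Edge x y → x ∈ verts ∧ y ∈ verts
  ne_of_edge : ∀ ⦃x y⦄, Edge x y → x ≠ y
  finite : verts.Finite

namespace Dgraph

variable {V : Type*}

/-- A directed path: a nonempty sequence of pairwise distinct vertices of `G`
in which each consecutive pair is joined by an edge of `G`. -/
def IsPath (G : Dgraph V) (p : List V) : Prop :=
  p ≠ [] ∧ p.Nodup ∧ p.Chain' G.Edge ∧ ∀ v ∈ p, v ∈ G.verts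

/-- A directed path from `a` to `b`. -/
def PathFrom (G : Dgraph V) (p : List V) (a b : V) : Prop :=
  G.IsPath p ∧ p.head? = some a ∧ p.getLast? = some b

/-- The internal vertices of a path (all vertices except the two endpoints). -/
def internals (p : List V) : List V := p.tail.dropLast

/-- Two paths are internally vertex-disjoint if no internal vertex of either
path lies on both paths. -/
def IntDisjoint (p q : List V) : Prop :=
  ∀ v, v ∈ internals p ∨ v ∈ internals q → ¬(v ∈ p ∧ v ∈ q)

/-- The digraph induced on `V(G) \ D`. -/
def delete (G : Dgraph V) (D : Set V) : Dgraph V where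
  verts := G.verts \ D
  Edge x y := G.Edge x y ∧ x ∉ D ∧ y ∉ D
  mem_of_edge := by
    intro x y h
    exact ⟨⟨(G.mem_of_edge h.1).1, h.2.1⟩, ⟨(G.mem_of_edge h.1).2, h.2.2⟩⟩
  ne_of_edge := by
    intro x y h
    exact G.ne_of_edge h.1
  finite := G.finite.diff

/-- `c 0, c 1, …, c k` is a sequence of cut vertices between `s` and `t1, t2`. -/
def IsCutSeq (G : Dgraph V) (s t1 t2 : V) (k : ℕ) (c : ℕ → V) : Prop :=
  c 0 = s ∧
  (∀ j < k,
    (∃ p q : List V, p ≠ q ∧ G.PathFrom p (c j) (c (j+1)) ∧ G.PathFrom q (c j) (c (j+1)) ∧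
      IntDisjoint p q) ∧
    (∀ p : List V, G.PathFrom p (c j) t1 ∨ G.PathFrom p (c j) t2 → c (j+1) ∈ p)) ∧
  ((c k = t1 ∧ t1 = t2) ∨
   (∃ p q : List V, G.PathFrom p (c k) t1 ∧ G.PathFrom q (c k) t2 ∧ IntDisjoint p q))

end Dgraph

/-- Concatenation of a list of paths, where the last vertex of each path equals
the first vertex of the next: traverse the first path, then each subsequent path
without repeating its first vertex. -/
def glue {V : Type*} : List (List V) → List V
  | [] => []
  | p :: ps => p ++ (ps.map List.tail).flatten

/-!
Say that `d` post-dominates `x` if `d` lies on every directed path from `x` to `{t1, t2}`. This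
relation is transitive, and it is antisymmetric on vertices that reach a target. Since `c (j + 1)`
post-dominates `c j`, it post-dominates every vertex of a path from `c j` to `c (j + 1)`; hence
each vertex of the `j`-th segment is post-dominated by all of the later cut vertices. Conversely,
the only vertex of the `i`-th segment that is post-dominated by `c i` is `c i` itself: the rest of
the segment leads away from `c i`, to a target or to `c (i + 1)`, which `c i` does not
post-dominate unless the two are equal. So a vertex common to the segments `j < i` is `c i`.
-/

namespace Dgraph

variable {V : Type*} {G : Dgraph V} {p q : List V} {a b d t v x y z : V} {T : Set V}

section Paths

lemma pathFrom_iff : G.PathFrom p a b ↔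
    p.Nodup ∧ p.IsChain G.Edge ∧ (∀ v ∈ p, v ∈ G.verts) ∧ p.head? = some a ∧
      p.getLast? = some b := by
  constructor
  · rintro ⟨⟨-, hnodup, hchain, hverts⟩, hhead, hlast⟩
    exact ⟨hnodup, hchain, hverts, hhead, hlast⟩
  · rintro ⟨hnodup, hchain, hverts, hhead, hlast⟩
    exact ⟨⟨by rintro rfl; simp at hhead, hnodup, hchain, hverts⟩, hhead, hlast⟩

lemma PathFrom.head_mem (hp : G.PathFrom p a b) : a ∈ p :=
  List.mem_of_head? hp.2.1

lemma PathFrom.last_mem (hp : G.PathFrom p a b) : b ∈ p :=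
  List.mem_of_getLast? hp.2.2

lemma PathFrom.mem_verts (hp : G.PathFrom p a b) (hv : v ∈ p) : v ∈ G.verts :=
  hp.1.2.2.2 v hv

lemma PathFrom.exists_eq_cons (hp : G.PathFrom p a b) : ∃ l, p = a :: l :=
  List.head?_eq_some_iff.1 hp.2.1

lemma PathFrom.exists_eq_concat (hp : G.PathFrom p a b) : ∃ l, p = l ++ [b] :=
  List.getLast?_eq_some_iff.1 hp.2.2

lemma pathFrom_singleton (ha : a ∈ G.verts) : G.PathFrom [a] a a :=
  pathFrom_iff.2 (by simpa using ha)

lemma pathFrom_append_cons_iff {l₁ l₂ : List V} :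
    G.PathFrom (l₁ ++ v :: l₂) a b ↔
      G.PathFrom (l₁ ++ [v]) a v ∧ G.PathFrom (v :: l₂) v b ∧
        ∀ x ∈ l₁ ++ [v], x ∈ v :: l₂ → x = v := by
  have hnodup : (l₁ ++ v :: l₂).Nodup ↔ (l₁ ++ [v]).Nodup ∧ (v :: l₂).Nodup ∧
      ∀ x ∈ l₁ ++ [v], x ∈ v :: l₂ → x = v := by grind
  have hhead : (l₁ ++ v :: l₂).head? = (l₁ ++ [v]).head? := by cases l₁ <;> rfl
  have hlast : (l₁ ++ v :: l₂).getLast? = (v :: l₂).getLast? :=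
    List.getLast?_append_of_ne_nil _ (List.cons_ne_nil _ _)
  have hchain : (l₁ ++ v :: l₂).IsChain G.Edge ↔
      (l₁ ++ [v]).IsChain G.Edge ∧ (v :: l₂).IsChain G.Edge := List.isChain_split
  rw [pathFrom_iff, pathFrom_iff, pathFrom_iff, hnodup, hchain, hhead, hlast]
  simp only [List.getLast?_concat, List.head?_cons, List.forall_mem_append, List.forall_mem_cons]
  tauto

lemma PathFrom.exists_split (hp : G.PathFrom p a b) (hv : v ∈ p) :
    ∃ q r, G.PathFrom q a v ∧ G.PathFrom r v b ∧ q ⊆ p ∧ r ⊆ p ∧ ∀ x ∈ q, x ∈ r → x = v := by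
  obtain ⟨l₁, l₂, rfl⟩ := List.append_of_mem hv
  obtain ⟨hq, hr, hqr⟩ := pathFrom_append_cons_iff.1 hp
  exact ⟨l₁ ++ [v], v :: l₂, hq, hr, by simp, by simp, hqr⟩

lemma PathFrom.append_tail (hp : G.PathFrom p a b) (hq : G.PathFrom q b d)
    (hpq : ∀ x ∈ p, x ∈ q → x = b) : G.PathFrom (p ++ q.tail) a d := by
  obtain ⟨l₁, rfl⟩ := hp.exists_eq_concat
  obtain ⟨l₂, rfl⟩ := hq.exists_eq_cons
  simpa using pathFrom_append_cons_iff.2 ⟨hp, hq, hpq⟩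

lemma PathFrom.mem_append_tail_iff (hq : G.PathFrom q b d) (hb : b ∈ p) :
    v ∈ p ++ q.tail ↔ v ∈ p ∨ v ∈ q := by
  obtain ⟨l, rfl⟩ := hq.exists_eq_cons
  grind

lemma PathFrom.exists_trans (hp : G.PathFrom p a b) (hq : G.PathFrom q b d) :
    ∃ r, G.PathFrom r a d ∧ r ⊆ p ++ q := by
  induction p generalizing a with
  | nil => simpa using hp.head_mem
  | cons x l ih =>
    obtain rfl : x = a := by simpa using hp.2.1
    by_cases hxq : x ∈ q
    · obtain ⟨-, r, -, hr, -, hrq, -⟩ := hq.exists_split hxq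
      exact ⟨r, hr, List.subset_append_of_subset_right _ hrq⟩
    match l with
    | [] =>
      obtain rfl : x = b := by simpa using hp.2.2
      exact absurd hq.head_mem hxq
    | y :: l =>
      obtain ⟨hxy, hl, hdisj⟩ := pathFrom_append_cons_iff (l₁ := [x]).1 hp
      obtain ⟨r, hr, hrsub⟩ := ih hl
      obtain ⟨m, rfl⟩ := hr.exists_eq_cons
      refine ⟨x :: y :: m, pathFrom_append_cons_iff (l₁ := [x]).2 ⟨hxy, hr, ?_⟩, by grind⟩
      grind

lemma PathFrom.eq_or_eq_or_mem_internals (hp : G.PathFrom p a b) (hv : v ∈ p) :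
    v = a ∨ v = b ∨ v ∈ internals p := by
  obtain ⟨l, rfl⟩ := hp.exists_eq_cons
  rcases List.eq_nil_or_concat l with rfl | ⟨m, z, rfl⟩
  · exact .inl (by simpa using hv)
  · obtain rfl : z = b := by simpa [List.getLast?_cons] using hp.2.2
    simpa [internals, or_comm (a := v ∈ m)] using hv

lemma IntDisjoint.eq_or_eq_and_eq (hpq : IntDisjoint p q) (hp : G.PathFrom p a b)
    (hq : G.PathFrom q a d) (hvp : v ∈ p) (hvq : v ∈ q) : v = a ∨ v = b ∧ v = d := by
  have hp_int : v ∉ internals p := fun h ↦ hpq v (.inl h) ⟨hvp, hvq⟩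
  have hq_int : v ∉ internals q := fun h ↦ hpq v (.inr h) ⟨hvp, hvq⟩
  have := hp.eq_or_eq_or_mem_internals hvp
  have := hq.eq_or_eq_or_mem_internals hvq
  tauto

end Paths

section PostDominates

/-- `d` post-dominates `x` with respect to the target set `T`: every directed path from `x` to a
vertex of `T` contains `d`. If `x` cannot reach `T`, then every `d` post-dominates `x`. -/
def PostDominates (G : Dgraph V) (T : Set V) (d x : V) : Prop :=
  ∀ ⦃p t⦄, t ∈ T → G.PathFrom p x t → d ∈ p

lemma PostDominates.refl (G : Dgraph V) (T : Set V) (x : V) : G.PostDominates T x x :=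
  fun _ _ _ hp ↦ hp.head_mem

lemma PostDominates.trans (hyx : G.PostDominates T y x) (hzy : G.PostDominates T z y) :
    G.PostDominates T z x := by
  intro p t ht hp
  obtain ⟨-, r, -, hr, -, hrp, -⟩ := hp.exists_split (hyx ht hp)
  exact hrp (hzy ht hr)

lemma PostDominates.antisymm (hyx : G.PostDominates T y x) (hxy : G.PostDominates T x y)
    (ht : t ∈ T) (hp : G.PathFrom p x t) : x = y := by
  obtain ⟨q, r, hq, hr, -, -, hqr⟩ := hp.exists_split (hyx ht hp)
  exact hqr x hq.head_mem (hxy ht hr)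

lemma PostDominates.of_mem_pathFrom (hda : G.PostDominates T d a) (hp : G.PathFrom p a d)
    (hv : v ∈ p) : G.PostDominates T d v := by
  intro r t ht hr
  obtain ⟨q₁, q₂, hq₁, hq₂, -, -, hq₁₂⟩ := hp.exists_split hv
  obtain ⟨w, hw, hwsub⟩ := hq₁.exists_trans hr
  rcases List.mem_append.1 (hwsub (hda ht hw)) with hd | hd
  · exact hq₁₂ d hd hq₂.last_mem ▸ hr.head_mem
  · exact hd

lemma PostDominates.eq_of_mem (hxt : G.PostDominates T x t) (ht : t ∈ T) (htG : t ∈ G.verts) :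
    t = x := by
  simpa [eq_comm] using hxt ht (pathFrom_singleton htG)

lemma PathFrom.eq_of_postDominates (hp : G.PathFrom p a b) (hv : v ∈ p)
    (hav : G.PostDominates T a v) (hab : G.PostDominates T a b → b = a) : v = a := by
  obtain ⟨q, r, hq, hr, -, -, hqr⟩ := hp.exists_split hv
  suffices har : a ∈ r from (hqr a hq.head_mem har).symm
  by_contra har
  have hab' : G.PostDominates T a b := by
    intro w t ht hw
    obtain ⟨u, hu, husub⟩ := hr.exists_trans hw
    exact (List.mem_append.1 (husub (hav ht hu))).resolve_left har
  exact har (hab hab' ▸ hr.last_mem)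

lemma postDominates_of_le {c : ℕ → V} {k i j : ℕ}
    (hcut : ∀ j < k, G.PostDominates T (c (j + 1)) (c j)) (hij : i ≤ j) (hjk : j ≤ k) :
    G.PostDominates T (c j) (c i) := by
  induction j, hij using Nat.le_induction with
  | base => exact .refl G T (c i)
  | succ j _ ih => exact (ih (by omega)).trans (hcut j hjk)

lemma IsCutSeq.postDominates {s t1 t2 : V} {k : ℕ} {c : ℕ → V} (hc : G.IsCutSeq s t1 t2 k c) :
    ∀ j < k, G.PostDominates {t1, t2} (c (j + 1)) (c j) := by
  rintro j hj p t (rfl | rfl) hp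
  · exact (hc.2.1 j hj).2 p (.inl hp)
  · exact (hc.2.1 j hj).2 p (.inr hp)

end PostDominates

section PathsThrough

/-- `P 0, …, P k` are directed paths leading in turn from `c 0` to `c 1`, from `c 1` to `c 2`, and
so on up to `c k`, and finally from `c k` to `t`. Entries of `c` and `P` past `k` are ignored. -/
structure PathsThrough (G : Dgraph V) (k : ℕ) (c : ℕ → V) (t : V) (P : ℕ → List V) : Prop where
  pathFrom_of_lt : ∀ j < k, G.PathFrom (P j) (c j) (c (j + 1))
  pathFrom_last : G.PathFrom (P k) (c k) t

variable {k i j : ℕ} {c : ℕ → V} {P : ℕ → List V}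

lemma PathsThrough.init (hP : G.PathsThrough (k + 1) c t P) : G.PathsThrough k c (c (k + 1)) P :=
  ⟨fun j hj ↦ hP.pathFrom_of_lt j (by omega), hP.pathFrom_of_lt k k.lt_succ_self⟩

lemma PathsThrough.exists_pathFrom (hP : G.PathsThrough k c t P) (hj : j ≤ k) :
    ∃ b, G.PathFrom (P j) (c j) b := by
  rcases hj.lt_or_eq with hjk | rfl
  · exact ⟨_, hP.pathFrom_of_lt j hjk⟩
  · exact ⟨_, hP.pathFrom_last⟩

lemma PathsThrough.mem (hP : G.PathsThrough k c t P) (hj : j ≤ k) : c j ∈ P j :=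
  (hP.exists_pathFrom hj).choose_spec.head_mem

lemma PathsThrough.exists_pathFrom_to_last (hP : G.PathsThrough k c t P) (hj : j ≤ k) :
    ∃ p, G.PathFrom p (c j) t := by
  induction hj using Nat.decreasingInduction with
  | self => exact ⟨P k, hP.pathFrom_last⟩
  | of_succ j hj ih =>
    obtain ⟨p, hp⟩ := ih
    obtain ⟨r, hr, -⟩ := (hP.pathFrom_of_lt j hj).exists_trans hp
    exact ⟨r, hr⟩

lemma glue_map_range_succ (P : ℕ → List V) (n : ℕ) :
    glue ((List.range (n + 2)).map P) =
      glue ((List.range (n + 1)).map P) ++ (P (n + 1)).tail := by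
  rw [List.range_succ, List.map_append, List.range_succ_eq_map]
  simp [glue]

lemma PathsThrough.mem_glue_iff (hP : G.PathsThrough k c t P) :
    v ∈ glue ((List.range (k + 1)).map P) ↔ ∃ j ≤ k, v ∈ P j := by
  induction k generalizing t v with
  | zero => simp [glue]
  | succ k ih =>
    have hjoin : c (k + 1) ∈ glue ((List.range (k + 1)).map P) :=
      (ih hP.init).2 ⟨k, le_rfl, hP.init.pathFrom_last.last_mem⟩
    rw [glue_map_range_succ, hP.pathFrom_last.mem_append_tail_iff hjoin, ih hP.init]
    simp only [Nat.le_succ_iff, or_and_right, exists_or, exists_eq_left]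

lemma PathsThrough.pathFrom_glue_of_inter (hP : G.PathsThrough k c t P)
    (hinter : ∀ i ≤ k, ∀ j < i, ∀ v ∈ P j, v ∈ P i → v = c i) :
    G.PathFrom (glue ((List.range (k + 1)).map P)) (c 0) t := by
  induction k generalizing t with
  | zero => simpa [glue] using hP.pathFrom_last
  | succ k ih =>
    rw [glue_map_range_succ]
    refine (ih hP.init fun i hi ↦ hinter i (by omega)).append_tail hP.pathFrom_last ?_
    intro v hv hvP
    obtain ⟨j, hj, hvj⟩ := hP.init.mem_glue_iff.1 hv
    exact hinter (k + 1) le_rfl j (by omega) v hvj hvP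

lemma PathsThrough.eq_of_postDominates (hP : G.PathsThrough k c t P) (ht : t ∈ T)
    (hcut : ∀ j < k, G.PostDominates T (c (j + 1)) (c j)) (hi : i ≤ k) (hv : v ∈ P i)
    (hiv : G.PostDominates T (c i) v) : v = c i := by
  rcases hi.lt_or_eq with hik | rfl
  · refine (hP.pathFrom_of_lt i hik).eq_of_postDominates hv hiv fun hback ↦ ?_
    obtain ⟨p, hp⟩ := hP.exists_pathFrom_to_last hik
    exact hback.antisymm (hcut i hik) ht hp
  · exact hP.pathFrom_last.eq_of_postDominates hv hiv fun hback ↦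
      hback.eq_of_mem ht (hP.pathFrom_last.mem_verts hP.pathFrom_last.last_mem)

lemma PathsThrough.eq_of_mem_of_mem (hP : G.PathsThrough k c t P) (ht : t ∈ T)
    (hcut : ∀ j < k, G.PostDominates T (c (j + 1)) (c j)) (hi : i ≤ k) (hji : j < i)
    (hp : G.PathFrom p (c j) (c (j + 1))) (hvp : v ∈ p) (hv : v ∈ P i) : v = c i := by
  have hsucc : G.PostDominates T (c (j + 1)) v :=
    (hcut j (by omega)).of_mem_pathFrom hp hvp
  exact hP.eq_of_postDominates ht hcut hi hv (hsucc.trans (postDominates_of_le hcut hji hi))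

lemma PathsThrough.pathFrom_glue (hP : G.PathsThrough k c t P) (ht : t ∈ T)
    (hcut : ∀ j < k, G.PostDominates T (c (j + 1)) (c j)) :
    G.PathFrom (glue ((List.range (k + 1)).map P)) (c 0) t :=
  hP.pathFrom_glue_of_inter fun _ hi j hji _ hvj hvi ↦
    hP.eq_of_mem_of_mem ht hcut hi hji (hP.pathFrom_of_lt j (by omega)) hvj hvi

lemma PathsThrough.exists_eq_of_mem_of_mem {t' : V} {P' : ℕ → List V}
    (hP : G.PathsThrough k c t P) (hP' : G.PathsThrough k c t' P') (ht : t ∈ T) (ht' : t' ∈ T)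
    (htt' : t ≠ t') (hcut : ∀ j < k, G.PostDominates T (c (j + 1)) (c j))
    (hdisj : ∀ j ≤ k, IntDisjoint (P j) (P' j)) (hi : i ≤ k) (hj : j ≤ k)
    (hvi : v ∈ P i) (hvj : v ∈ P' j) : ∃ m ≤ k, v = c m := by
  rcases lt_trichotomy i j with hij | rfl | hji
  · exact ⟨j, hj, hP'.eq_of_mem_of_mem ht' hcut hj hij (hP.pathFrom_of_lt i (by omega)) hvi hvj⟩
  · rcases hi.lt_or_eq with hik | rfl
    · rcases (hdisj i hi).eq_or_eq_and_eq (hP.pathFrom_of_lt i hik) (hP'.pathFrom_of_lt i hik)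
        hvi hvj with hv | ⟨hv, -⟩
      · exact ⟨i, hi, hv⟩
      · exact ⟨i + 1, hik, hv⟩
    · rcases (hdisj i hi).eq_or_eq_and_eq hP.pathFrom_last hP'.pathFrom_last hvi hvj
        with hv | ⟨hv, hv'⟩
      · exact ⟨i, hi, hv⟩
      · exact absurd (hv.symm.trans hv') htt'
  · exact ⟨i, hi, hP.eq_of_mem_of_mem ht hcut hi hji (hP'.pathFrom_of_lt j (by omega)) hvj hvi⟩

end PathsThrough

end Dgraph

theorem stmt4_general {V : Type*} (G : Dgraph V) (t1 t2 : V) (ht : t1 ≠ t2) (k : ℕ) (c : ℕ → V)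
    (hcut : ∀ j < k, G.PostDominates {t1, t2} (c (j + 1)) (c j)) (P1 P2 : ℕ → List V)
    (hP1 : G.PathsThrough k c t1 P1) (hP2 : G.PathsThrough k c t2 P2)
    (hdisj : ∀ j ≤ k, Dgraph.IntDisjoint (P1 j) (P2 j)) :
    G.PathFrom (glue ((List.range (k + 1)).map P1)) (c 0) t1 ∧
    G.PathFrom (glue ((List.range (k + 1)).map P2)) (c 0) t2 ∧
    {v | v ∈ glue ((List.range (k + 1)).map P1) ∧ v ∈ glue ((List.range (k + 1)).map P2)} =
      {v | ∃ i ≤ k, v = c i} := by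
  have ht1 : t1 ∈ ({t1, t2} : Set V) := .inl rfl
  have ht2 : t2 ∈ ({t1, t2} : Set V) := .inr rfl
  refine ⟨hP1.pathFrom_glue ht1 hcut, hP2.pathFrom_glue ht2 hcut, Set.ext fun v ↦ ?_⟩
  simp only [Set.mem_ofPred_eq, hP1.mem_glue_iff, hP2.mem_glue_iff]
  constructor
  · rintro ⟨⟨i, hi, hvi⟩, ⟨j, hj, hvj⟩⟩
    exact hP1.exists_eq_of_mem_of_mem hP2 ht1 ht2 ht hcut hdisj hi hj hvi hvj
  · rintro ⟨i, hi, rfl⟩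
    exact ⟨⟨i, hi, hP1.mem hi⟩, ⟨i, hi, hP2.mem hi⟩⟩

/-- Let `c 0, …, c k` be a sequence of cut vertices between `s`
and `t1, t2` (`t1 ≠ t2`) with pairwise distinct entries, let `P¹ j, P² j` be
internally vertex-disjoint paths from `c j` to `c (j+1)` for `j < k`, and let
`P¹ k, P² k` be internally vertex-disjoint paths from `c k` to `t1` and `t2`.
Then the concatenation `Q1` of the `P¹ j` is a directed path from `s` to `t1`,
the concatenation `Q2` of the `P² j` is a directed path from `s` to `t2`, and
`V(Q1) ∩ V(Q2) = {c 0, …, c k}`. -/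
theorem stmt4 {V : Type*} (G : Dgraph V) (s t1 t2 : V)
    (hs1 : s ≠ t1) (hs2 : s ≠ t2) (ht : t1 ≠ t2)
    (k : ℕ) (c : ℕ → V)
    (hcut : G.IsCutSeq s t1 t2 k c)
    (hinj : ∀ i j, i ≤ k → j ≤ k → c i = c j → i = j)
    (P1 P2 : ℕ → List V)
    (hP : ∀ j < k, G.PathFrom (P1 j) (c j) (c (j + 1)) ∧
        G.PathFrom (P2 j) (c j) (c (j + 1)) ∧ Dgraph.IntDisjoint (P1 j) (P2 j))
    (hPk1 : G.PathFrom (P1 k) (c k) t1) (hPk2 : G.PathFrom (P2 k) (c k) t2)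
    (hPkdisj : Dgraph.IntDisjoint (P1 k) (P2 k))
    (Q1 Q2 : List V)
    (hQ1 : Q1 = glue ((List.range (k + 1)).map P1))
    (hQ2 : Q2 = glue ((List.range (k + 1)).map P2)) :
    G.PathFrom Q1 s t1 ∧ G.PathFrom Q2 s t2 ∧
    {v | v ∈ Q1 ∧ v ∈ Q2} = {v | ∃ i ≤ k, v = c i} := by
  exact hQ1 ▸ hQ2 ▸ hcut.1 ▸ stmt4_general G t1 t2 ht k c hcut.postDominates P1 P2
    ⟨fun j hj ↦ (hP j hj).1, hPk1⟩ ⟨fun j hj ↦ (hP j hj).2.1, hPk2⟩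
    fun j hj ↦ hj.lt_or_eq.elim (fun hjk ↦ (hP j hjk).2.2) fun hjk ↦ hjk ▸ hPkdisj
end

section
/- Let G be a digraph and let x1, x2, y1, y2, y3, y4 be vertices of G with x1 ∉ {y1, y2}, x2 ∉ {y3, y4}, y1 ≠ y2, and y3 ≠ y4. Suppose c_0, c_1, …, c_p is a sequence of cut vertices, with pairwise distinct entries, between x1 and y1, y2 in the digraph G − {d_0, d_1, …, d_q}, and simultaneously d_0, d_1, …, d_q is a sequence of cut vertices, with pairwise distinct entries, between x2 and y3, y4 in the digraph G − {c_0, c_1, …, c_p}. Then there exist directed paths Q1 from x1 to y1, Q2 from x1 to y2, Q3 from x2 to y3, and Q4 from x2 to y4 in G such that every vertex of G lies on at most two of the four paths. -/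
/-!
Suppose every path from `a` to `t` passes through `b`. Then a path from `a` to `b` and a path from
`b` to `t` meet only in `b`: otherwise one could switch from the former to the latter at a common
vertex `z ≠ b`, and thereby reach `t` from `a` while avoiding `b`. Hence concatenating the pairs of
internally disjoint paths along a sequence of cut vertices gives two paths that meet only in cut
vertices. Each of the two pairs obtained in this way avoids the cut vertices of the other pair, so
no vertex shared by one pair of paths lies on the other pair.
-/

namespace Dgraph

variable {V : Type*} {G : Dgraph V} {a b t z : V} {p q : List V}

namespace PathFrom

theorem left_mem (hp : G.PathFrom p a b) : a ∈ p :=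
  List.mem_of_mem_head? hp.2.1

theorem right_mem (hp : G.PathFrom p a b) : b ∈ p :=
  List.mem_of_getLast? hp.2.2

theorem cons (hab : G.Edge a b) (hq : G.PathFrom q b t) (ha : a ∉ q) :
    G.PathFrom (a :: q) a t := by
  obtain ⟨⟨-, hnodup, hchain, hverts⟩, hhead, hlast⟩ := hq
  refine ⟨⟨List.cons_ne_nil _ _, hnodup.cons ha, hchain.cons ?_, ?_⟩, rfl, ?_⟩
  · simpa [hhead] using hab
  · exact List.forall_mem_cons.2 ⟨(G.mem_of_edge hab).1, hverts⟩
  · simp [List.getLast?_cons, hlast]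

theorem edge_and_tail {y : V} {l : List V} (hp : G.PathFrom (a :: y :: l) a b) :
    G.Edge a y ∧ G.PathFrom (y :: l) y b := by
  obtain ⟨⟨-, hnodup, hchain, hverts⟩, -, hlast⟩ := hp
  obtain ⟨hay, hchain⟩ := List.isChain_cons_cons.1 hchain
  exact ⟨hay, ⟨List.cons_ne_nil _ _, hnodup.of_cons, hchain, (List.forall_mem_cons.1 hverts).2⟩,
    rfl, by rwa [List.getLast?_cons_cons] at hlast⟩

theorem exists_split_s8 (hp : G.PathFrom p a b) (hz : z ∈ p) :
    ∃ q r, G.PathFrom q a z ∧ G.PathFrom r z b ∧ q ⊆ p ∧ r ⊆ p ∧ ∀ v ∈ q, v ∈ r → v = z := by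
  obtain ⟨⟨-, hnodup, hchain, hverts⟩, hhead, hlast⟩ := hp
  obtain ⟨l, l', rfl⟩ := List.append_of_mem hz
  have hprefix : l ++ [z] <+: l ++ z :: l' := ⟨l', by simp⟩
  have hsuffix : z :: l' <:+ l ++ z :: l' := List.suffix_append _ _
  refine ⟨l ++ [z], z :: l',
    ⟨⟨by simp, hnodup.sublist hprefix.sublist, hchain.prefix hprefix,
      fun v hv => hverts v (hprefix.subset hv)⟩, ?_, by simp⟩,
    ⟨⟨by simp, hnodup.sublist hsuffix.sublist, hchain.suffix hsuffix,
      fun v hv => hverts v (hsuffix.subset hv)⟩, rfl, ?_⟩,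
    hprefix.subset, hsuffix.subset, ?_⟩
  · simpa [List.head?_append] using hhead
  · simpa [List.getLast?_append] using hlast
  · intro v hv hv'
    have hdisj := List.disjoint_of_nodup_append hnodup
    rcases List.mem_append.1 hv with hvl | hvz
    · exact (hdisj hvl hv').elim
    · exact List.mem_singleton.1 hvz

theorem exists_subset_cons (hab : G.Edge a b) (hq : G.PathFrom q b t) :
    ∃ r, G.PathFrom r a t ∧ r ⊆ a :: q := by
  by_cases ha : a ∈ q
  · obtain ⟨-, r, -, hr, -, hrq, -⟩ := hq.exists_split_s8 ha
    exact ⟨r, hr, List.subset_cons_of_subset a hrq⟩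
  · exact ⟨a :: q, hq.cons hab ha, List.Subset.refl _⟩

theorem exists_subset_append (hp : G.PathFrom p a b) (hq : G.PathFrom q b t) :
    ∃ r, G.PathFrom r a t ∧ r ⊆ p ++ q := by
  induction p generalizing a with
  | nil => exact absurd rfl hp.1.1
  | cons x l ih =>
    obtain rfl : x = a := by simpa using hp.2.1
    cases l with
    | nil =>
      obtain rfl : x = b := by simpa using hp.2.2
      exact ⟨q, hq, List.subset_append_right _ _⟩
    | cons y l =>
      obtain ⟨hxy, hl⟩ := hp.edge_and_tail
      obtain ⟨r, hr, hrsub⟩ := ih hl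
      obtain ⟨r', hr', hrsub'⟩ := exists_subset_cons hxy hr
      exact ⟨r', hr', List.Subset.trans hrsub' (List.cons_subset_cons x hrsub)⟩

theorem eq_of_mem_of_mem_of_cut (hcut : ∀ r, G.PathFrom r a t → b ∈ r) (hp : G.PathFrom p a b)
    (hq : G.PathFrom q b t) (hzp : z ∈ p) (hzq : z ∈ q) : z = b := by
  obtain ⟨p₁, p₂, hp₁, hp₂, -, -, hmeetp⟩ := hp.exists_split_s8 hzp
  obtain ⟨q₁, q₂, hq₁, hq₂, -, -, hmeetq⟩ := hq.exists_split_s8 hzq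
  obtain ⟨r, hr, hrsub⟩ := hp₁.exists_subset_append hq₂
  rcases List.mem_append.1 (hrsub (hcut r hr)) with hb | hb
  · exact (hmeetp b hb hp₂.right_mem).symm
  · exact (hmeetq b hq₁.left_mem hb).symm

theorem mem_internals_or_eq_or_eq (hp : G.PathFrom p a b) (hz : z ∈ p) :
    z ∈ internals p ∨ z = a ∨ z = b := by
  obtain ⟨-, hhead, hlast⟩ := hp
  obtain ⟨l, rfl⟩ := List.head?_eq_some_iff.1 hhead
  rcases List.mem_cons.1 hz with rfl | hzl
  · exact .inr (.inl rfl)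
  · have hl : l ≠ [] := List.ne_nil_of_mem hzl
    have hb : l.getLast hl = b := by
      simpa [List.getLast?_cons, List.getLast?_eq_getLast_of_ne_nil hl] using hlast
    rw [← List.dropLast_append_getLast hl, List.mem_append, List.mem_singleton, hb] at hzl
    exact hzl.imp_right .inr

theorem of_delete {D : Set V} (hp : (G.delete D).PathFrom p a b) : G.PathFrom p a b := by
  obtain ⟨⟨hne, hnodup, hchain, hverts⟩, hends⟩ := hp
  exact ⟨⟨hne, hnodup, hchain.imp fun _ _ h => h.1, fun v hv => (hverts v hv).1⟩, hends⟩

theorem notMem_of_delete {D : Set V} (hp : (G.delete D).PathFrom p a b) (hz : z ∈ p) : z ∉ D :=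
  (hp.1.2.2.2 z hz).2

end PathFrom

theorem IntDisjoint.eq_endpoints {a' b' : V} (hpq : IntDisjoint p q) (hp : G.PathFrom p a b)
    (hq : G.PathFrom q a' b') (hzp : z ∈ p) (hzq : z ∈ q) :
    (z = a ∨ z = b) ∧ (z = a' ∨ z = b') :=
  ⟨(hp.mem_internals_or_eq_or_eq hzp).resolve_left fun h => hpq z (.inl h) ⟨hzp, hzq⟩,
    (hq.mem_internals_or_eq_or_eq hzq).resolve_left fun h => hpq z (.inr h) ⟨hzp, hzq⟩⟩

namespace IsCutSeq

variable {s t₁ t₂ : V} {k : ℕ} {c : ℕ → V}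

theorem tail (h : G.IsCutSeq s t₁ t₂ (k + 1) c) :
    G.IsCutSeq (c 1) t₁ t₂ k (fun i => c (i + 1)) :=
  ⟨rfl, fun j hj => h.2.1 (j + 1) (Nat.succ_lt_succ hj), h.2.2⟩

theorem exists_paths_meeting_in_cut_vertices (ht : t₁ ≠ t₂) (h : G.IsCutSeq s t₁ t₂ k c) :
    ∃ Q₁ Q₂, G.PathFrom Q₁ s t₁ ∧ G.PathFrom Q₂ s t₂ ∧
      ∀ z ∈ Q₁, z ∈ Q₂ → ∃ i ≤ k, z = c i := by
  induction k generalizing s c with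
  | zero =>
    obtain ⟨rfl, -, ⟨-, ht'⟩ | ⟨p, q, hp, hq, hpq⟩⟩ := h
    · exact absurd ht' ht
    · refine ⟨p, q, hp, hq, fun z hzp hzq => ⟨0, le_rfl, ?_⟩⟩
      obtain ⟨rfl | rfl, hz | hz⟩ := hpq.eq_endpoints hp hq hzp hzq
      exacts [rfl, rfl, hz, absurd hz ht]
  | succ k ih =>
    obtain ⟨Q₁, Q₂, hQ₁, hQ₂, hmeet⟩ := ih h.tail
    obtain ⟨rfl, hseg, -⟩ := h
    obtain ⟨⟨p, q, -, hp, hq, hpq⟩, hcut⟩ := hseg 0 k.succ_pos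
    obtain ⟨R₁, hR₁, hsub₁⟩ := hp.exists_subset_append hQ₁
    obtain ⟨R₂, hR₂, hsub₂⟩ := hq.exists_subset_append hQ₂
    refine ⟨R₁, R₂, hR₁, hR₂, fun z hz₁ hz₂ => ?_⟩
    rcases List.mem_append.1 (hsub₁ hz₁) with hzp | hzQ₁ <;>
      rcases List.mem_append.1 (hsub₂ hz₂) with hzq | hzQ₂
    · obtain ⟨rfl | rfl, -⟩ := hpq.eq_endpoints hp hq hzp hzq
      exacts [⟨0, Nat.zero_le _, rfl⟩, ⟨1, k.succ_pos, rfl⟩]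
    · exact ⟨1, k.succ_pos, hp.eq_of_mem_of_mem_of_cut (fun r hr => hcut r (.inr hr)) hQ₂ hzp hzQ₂⟩
    · exact ⟨1, k.succ_pos, hq.eq_of_mem_of_mem_of_cut (fun r hr => hcut r (.inl hr)) hQ₁ hzq hzQ₁⟩
    · obtain ⟨i, hi, rfl⟩ := hmeet z hzQ₁ hzQ₂
      exact ⟨i + 1, Nat.succ_le_succ hi, rfl⟩

end IsCutSeq

end Dgraph

/-- Suppose `cs 0, …, cs p` is a sequence of cut vertices (with
pairwise distinct entries) between `x1` and `y1, y2` in `G − {ds 0, …, ds q}`,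
and simultaneously `ds 0, …, ds q` is a sequence of cut vertices (with pairwise
distinct entries) between `x2` and `y3, y4` in `G − {cs 0, …, cs p}`.  Then
there is a half-integral routing: paths `Q1 : x1 → y1`, `Q2 : x1 → y2`,
`Q3 : x2 → y3`, `Q4 : x2 → y4` in `G` with every vertex on at most two of the
four paths. -/
theorem stmt8 {V : Type*} [DecidableEq V] (G : Dgraph V) (x1 x2 y1 y2 y3 y4 : V)
    (hx11 : x1 ≠ y1) (hx12 : x1 ≠ y2) (hx23 : x2 ≠ y3) (hx24 : x2 ≠ y4)
    (hy12 : y1 ≠ y2) (hy34 : y3 ≠ y4)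
    (p q : ℕ) (cs ds : ℕ → V)
    (hcinj : ∀ i j, i ≤ p → j ≤ p → cs i = cs j → i = j)
    (hdinj : ∀ i j, i ≤ q → j ≤ q → ds i = ds j → i = j)
    (hc : (G.delete {v | ∃ j ≤ q, v = ds j}).IsCutSeq x1 y1 y2 p cs)
    (hd : (G.delete {v | ∃ i ≤ p, v = cs i}).IsCutSeq x2 y3 y4 q ds) :
    ∃ Q1 Q2 Q3 Q4 : List V,
      G.PathFrom Q1 x1 y1 ∧ G.PathFrom Q2 x1 y2 ∧
      G.PathFrom Q3 x2 y3 ∧ G.PathFrom Q4 x2 y4 ∧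
      ∀ z : V,
        (if z ∈ Q1 then 1 else 0) + (if z ∈ Q2 then 1 else 0) +
        (if z ∈ Q3 then 1 else 0) + (if z ∈ Q4 then 1 else 0) ≤ 2 := by
  obtain ⟨Q1, Q2, hQ1, hQ2, hmeet12⟩ := hc.exists_paths_meeting_in_cut_vertices hy12
  obtain ⟨Q3, Q4, hQ3, hQ4, hmeet34⟩ := hd.exists_paths_meeting_in_cut_vertices hy34
  refine ⟨Q1, Q2, Q3, Q4, hQ1.of_delete, hQ2.of_delete, hQ3.of_delete, hQ4.of_delete, fun z => ?_⟩
  have h12 (h1 : z ∈ Q1) (h2 : z ∈ Q2) : z ∉ Q3 ∧ z ∉ Q4 :=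
    ⟨fun h3 => hQ3.notMem_of_delete h3 (hmeet12 z h1 h2),
      fun h4 => hQ4.notMem_of_delete h4 (hmeet12 z h1 h2)⟩
  have h34 (h3 : z ∈ Q3) (h4 : z ∈ Q4) : z ∉ Q1 ∧ z ∉ Q2 :=
    ⟨fun h1 => hQ1.notMem_of_delete h1 (hmeet34 z h3 h4),
      fun h2 => hQ2.notMem_of_delete h2 (hmeet34 z h3 h4)⟩
  grind
end
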